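/- arXiv:1606.02411 — 8 statements merged into one kernel-verified Lean document; each statement's English description precedes it below -/
import Mathlib

section
/- Let α ∈ (0,1] and let f : ℝ → ℝ be bounded, non-decreasing, right-continuous, and vanishing on (-∞,0). Then the function a ↦ 1_{[0,∞)}(a) · Q^α f(a) is again bounded, non-decreasing, right-continuous, and vanishes on (-∞,0). -/
/-! For fixed `y`, the map `a ↦ f (α * a + √α * y)` inherits monotonicity and right-continuity
from `f` because `0 ≤ α`. Integrating against the Gaussian probability measure preserves the bound
and monotonicity, and dominated convergence (with a constant dominating function) preserves
right-continuity. Cutting off at `0` keeps monotonicity because the integral is nonnegative, and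
keeps right-continuity because `[0,∞)` contains its left endpoint: a small right neighbourhood
of `a` lies entirely in `[0,∞)` or entirely in its complement. -/

open MeasureTheory ProbabilityTheory

/-- Claim (4.2) of Lemma 4.1: if `f` is bounded, non-decreasing, right-continuous and
vanishes on `(-∞,0)`, then so is `a ↦ 1_{[0,∞)}(a) · Q^α f(a)`, where
`Q^α f(a) = ∫ f(α·a + √α·y) dγ(y)` and `γ` is the standard Gaussian measure. -/
theorem stmt0 (α : ℝ) (hα : α ∈ Set.Ioc (0:ℝ) 1)
    (f : ℝ → ℝ)
    (hbdd : ∃ C, ∀ a, |f a| ≤ C)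
    (hmono : Monotone f)
    (hrc : ∀ a, ContinuousWithinAt f (Set.Ici a) a)
    (hvan : ∀ a < (0:ℝ), f a = 0)
    (g : ℝ → ℝ)
    (hg : g = Set.indicator (Set.Ici (0:ℝ))
      (fun a => ∫ y, f (α * a + Real.sqrt α * y) ∂(gaussianReal 0 1))) :
    (∃ C, ∀ a, |g a| ≤ C) ∧ Monotone g ∧
      (∀ a, ContinuousWithinAt g (Set.Ici a) a) ∧ (∀ a < (0:ℝ), g a = 0) := by
  obtain ⟨C, hC⟩ := hbdd
  have hα0 : 0 ≤ α := hα.1.le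
  have hf0 : ∀ x, 0 ≤ f x := fun x =>
    (hvan (min x (-1)) (by simp)).symm.le.trans (hmono (min_le_left _ _))
  have hmeas : ∀ a, AEStronglyMeasurable (fun y => f (α * a + √α * y)) (gaussianReal 0 1) :=
    fun a => (hmono.measurable.comp (by fun_prop)).aestronglyMeasurable
  have hint : ∀ a, Integrable (fun y => f (α * a + √α * y)) (gaussianReal 0 1) :=
    fun a => Integrable.of_bound (hmeas a) C (Filter.Eventually.of_forall fun y => hC _)
  have hpos : ∀ a, 0 ≤ ∫ y, f (α * a + √α * y) ∂(gaussianReal 0 1) :=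
    fun a => integral_nonneg fun y => hf0 _
  have hgneg : ∀ a < (0:ℝ), g a = 0 := fun a ha => by
    rw [hg, Set.indicator_of_notMem (by simpa using ha)]
  have hgpos : ∀ a, 0 ≤ a → g a = ∫ y, f (α * a + √α * y) ∂(gaussianReal 0 1) :=
    fun a ha => by rw [hg, Set.indicator_of_mem (Set.mem_Ici.2 ha)]
  refine ⟨⟨C, fun a => ?_⟩, fun a b hab => ?_, fun a => ?_, hgneg⟩
  · rcases lt_or_ge a 0 with ha | ha
    · rw [hgneg a ha, abs_zero]
      exact (abs_nonneg _).trans (hC 0)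
    · rw [hgpos a ha]
      simpa using norm_integral_le_of_norm_le_const (μ := gaussianReal 0 1)
        (f := fun y => f (α * a + √α * y)) (C := C)
        (Filter.Eventually.of_forall fun y => hC (α * a + √α * y))
  · rcases lt_or_ge a 0 with ha | ha
    · rw [hgneg a ha]
      rcases lt_or_ge b 0 with hb | hb
      · rw [hgneg b hb]
      · rw [hgpos b hb]
        exact hpos b
    · rw [hgpos a ha, hgpos b (ha.trans hab)]
      exact integral_mono (hint a) (hint b) fun y => hmono (by gcongr)
  · rcases lt_or_ge a 0 with ha | ha
    · have h : g =ᶠ[nhds a] fun _ => 0 :=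
        Filter.eventually_of_mem (Iio_mem_nhds ha) hgneg
      exact (continuousAt_const.congr h.symm).continuousWithinAt
    · have key : ContinuousWithinAt
          (fun a => ∫ y, f (α * a + √α * y) ∂(gaussianReal 0 1)) (Set.Ici a) a := by
        refine continuousWithinAt_of_dominated (bound := fun _ => C)
          (Filter.Eventually.of_forall hmeas)
          (Filter.Eventually.of_forall fun x => Filter.Eventually.of_forall fun y => hC _)
          (integrable_const C) (Filter.Eventually.of_forall fun y => ?_)
        refine ContinuousWithinAt.comp (t := Set.Ici (α * a + √α * y))
          (f := fun x => α * x + √α * y) (hrc _) (by fun_prop) fun x hx => ?_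
        have hx' : a ≤ x := hx
        show α * a + √α * y ≤ α * x + √α * y
        gcongr
      exact key.congr (fun x hx => hgpos x (ha.trans hx)) (hgpos a ha)
end

section
/- Let f : ℝ → ℝ be bounded, non-decreasing, right-continuous, and vanishing on (-∞,0). Then for every a ≥ 0 and every 0 < α ≤ α' ≤ 1 one has Q^α f(a) ≤ Q^{α'} f(a); in other words, for each fixed a ∈ ℝ the map α ↦ 1_{[0,∞)}(a) · Q^α f(a) is non-decreasing on (0,1]. -/
/-!
Since `αa + √α y = √α (√α a + y)`, the inequality between the integrands already holds for every
`y` (`comp_affine_le`): if `√α a + y < 0` the left side vanishes while `f ≥ 0`, and otherwise both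
nonnegative factors increase with `α`. Integrating gives the result; the integrands are integrable
because `f` is bounded and, being monotone, measurable.
-/

open MeasureTheory ProbabilityTheory

/-- Pointwise form of the claim, before integrating against the Gaussian. -/
theorem comp_affine_le {f : ℝ → ℝ} (hmono : Monotone f) (hvan : ∀ a < (0:ℝ), f a = 0)
    {a α α' : ℝ} (ha : 0 ≤ a) (hα : 0 < α) (hαα' : α ≤ α') (y : ℝ) :
    f (α * a + Real.sqrt α * y) ≤ f (α' * a + Real.sqrt α' * y) := by
  have hs : 0 < Real.sqrt α := Real.sqrt_pos.2 hα
  have hss' : Real.sqrt α ≤ Real.sqrt α' := Real.sqrt_le_sqrt hαα'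
  have factor : ∀ β : ℝ, 0 ≤ β →
      β * a + Real.sqrt β * y = Real.sqrt β * (Real.sqrt β * a + y) := fun β hβ => by
    rw [mul_add, ← mul_assoc, Real.mul_self_sqrt hβ]
  rw [factor α hα.le, factor α' (hα.le.trans hαα')]
  rcases lt_or_ge (Real.sqrt α * a + y) 0 with hneg | hpos
  · rw [hvan _ (mul_neg_of_pos_of_neg hs hneg)]
    -- `f` is nonnegative, being non-decreasing and zero far to the left
    rw [← hvan (min (-1) (Real.sqrt α' * (Real.sqrt α' * a + y)))
      (lt_of_le_of_lt (min_le_left _ _) (by norm_num))]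
    exact hmono (min_le_right _ _)
  · apply hmono
    gcongr

/-- Claim (4.3) of Lemma 4.1: for `f` bounded, non-decreasing, right-continuous and
vanishing on `(-∞,0)`, and for `a ≥ 0`, the quantity `Q^α f(a)` is non-decreasing in
`α ∈ (0,1]`; equivalently, for each fixed `a` the map
`α ↦ 1_{[0,∞)}(a) · Q^α f(a)` is non-decreasing on `(0,1]`. -/
theorem stmt1 (f : ℝ → ℝ)
    (hbdd : ∃ C, ∀ a, |f a| ≤ C)
    (hmono : Monotone f)
    (hrc : ∀ a, ContinuousWithinAt f (Set.Ici a) a)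
    (hvan : ∀ a < (0:ℝ), f a = 0) :
    (∀ a : ℝ, 0 ≤ a → ∀ α α' : ℝ, 0 < α → α ≤ α' → α' ≤ 1 →
      ∫ y, f (α * a + Real.sqrt α * y) ∂(gaussianReal 0 1) ≤
        ∫ y, f (α' * a + Real.sqrt α' * y) ∂(gaussianReal 0 1)) ∧
    (∀ a : ℝ, MonotoneOn
      (fun α : ℝ => Set.indicator (Set.Ici (0:ℝ))
        (fun a => ∫ y, f (α * a + Real.sqrt α * y) ∂(gaussianReal 0 1)) a)
      (Set.Ioc (0:ℝ) 1)) := by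
  have key : ∀ a : ℝ, 0 ≤ a → ∀ α α' : ℝ, 0 < α → α ≤ α' →
      ∫ y, f (α * a + Real.sqrt α * y) ∂(gaussianReal 0 1) ≤
        ∫ y, f (α' * a + Real.sqrt α' * y) ∂(gaussianReal 0 1) := by
    intro a ha α α' hα hαα'
    obtain ⟨C, hC⟩ := hbdd
    have hint : ∀ β : ℝ,
        Integrable (fun y => f (β * a + Real.sqrt β * y)) (gaussianReal 0 1) := fun β =>
      Integrable.of_bound
        (hmono.measurable.comp (by fun_prop)).aestronglyMeasurable C
        (Filter.Eventually.of_forall fun y => hC _)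
    exact integral_mono (hint α) (hint α') (comp_affine_le hmono hvan ha hα hαα')
  refine ⟨fun a ha α α' hα hαα' _ => key a ha α α' hα hαα', ?_⟩
  intro a α hα α' _ hαα'
  by_cases ha : 0 ≤ a
  · simpa [Set.indicator, ha] using key a ha α α' hα.1 hαα'
  · simp [Set.indicator, ha]
end

section
/- Let h ≥ 0, let 0 < ᾱ ≤ α ≤ 1, and let q : ℝ → ℝ be non-increasing, right-continuous, with values in [0,1], and equal to 1 on (-∞,h). Then for every a ≥ 0 one has Q^α q(a) ≤ Q^ᾱ q(a). -/
/-!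
The comparison already holds pointwise in `y`. Write `β * a + √β * y = √β * (√β * a + y)`.
If the value at `β = αbar` is below `h`, then `q` equals its maximum `1` there. Otherwise that
value is at least `h ≥ 0`, so `√αbar * a + y ≥ 0`; since `a ≥ 0`, increasing `β` to `α` increases
both factors, hence the argument of `q`, and `q` is antitone. Integrating gives the result.
-/

open MeasureTheory ProbabilityTheory

/-- The key inequality in step (4.12) of the proof of Proposition 4.2: for `h ≥ 0`,
`0 < ᾱ ≤ α ≤ 1`, and `q : ℝ → ℝ` non-increasing, right-continuous, `[0,1]`-valued and
equal to `1` on `(-∞,h)`, one has `Q^α q(a) ≤ Q^ᾱ q(a)` for all `a ≥ 0`. -/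
theorem stmt3 (h : ℝ) (hh : 0 ≤ h) (αbar α : ℝ)
    (h1 : 0 < αbar) (h2 : αbar ≤ α) (h3 : α ≤ 1)
    (q : ℝ → ℝ)
    (hanti : Antitone q)
    (hrc : ∀ a, ContinuousWithinAt q (Set.Ici a) a)
    (hrange : ∀ a, q a ∈ Set.Icc (0:ℝ) 1)
    (hone : ∀ a < h, q a = 1) :
    ∀ a : ℝ, 0 ≤ a →
      ∫ y, q (α * a + Real.sqrt α * y) ∂(gaussianReal 0 1) ≤
        ∫ y, q (αbar * a + Real.sqrt αbar * y) ∂(gaussianReal 0 1) := by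
  intro a ha
  have integrable_comp : ∀ β : ℝ,
      Integrable (fun y => q (β * a + Real.sqrt β * y)) (gaussianReal 0 1) := fun β =>
    Integrable.of_bound (C := 1)
      (hanti.measurable.comp (by fun_prop)).aestronglyMeasurable
      (Filter.Eventually.of_forall fun y => by
        rw [Real.norm_eq_abs, abs_of_nonneg (hrange _).1]
        exact (hrange _).2)
  refine integral_mono (integrable_comp α) (integrable_comp αbar) fun y => ?_
  dsimp only
  rcases lt_or_ge (αbar * a + Real.sqrt αbar * y) h with hlt | hge
  · rw [hone _ hlt]
    exact (hrange _).2
  · apply hanti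
    have factor : ∀ β : ℝ, 0 ≤ β →
        β * a + Real.sqrt β * y = Real.sqrt β * (Real.sqrt β * a + y) := fun β hβ => by
      linear_combination (-a) * Real.mul_self_sqrt hβ
    have hs : Real.sqrt αbar ≤ Real.sqrt α := Real.sqrt_le_sqrt h2
    rw [factor αbar h1.le] at hge ⊢
    rw [factor α (h1.le.trans h2)]
    have hnonneg : 0 ≤ Real.sqrt αbar * a + y :=
      nonneg_of_mul_nonneg_right (hh.trans hge) (Real.sqrt_pos.2 h1)
    gcongr
end

section
/- Let G be a locally finite connected simple graph with vertex set V, let x₀ ∈ V, let U be a finite connected subset of V containing x₀, let Δ be the outer vertex boundary of U (the vertices outside U adjacent to U), and set Ū = U ∪ Δ. Let φ : V → ℝ and h ∈ ℝ. Then the following are equivalent: (i) there is no path inside Ū from x₀ to a vertex of Δ all of whose vertices y satisfy φ(y) ≥ h; (ii) either φ(x₀) < h, or there exists a nonempty connected subset K ⊆ U with x₀ ∈ K such that φ(y) < h for every vertex y in the outer vertex boundary of K. -/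
/-!
The set `K` that witnesses disconnection is the cluster of `x₀` inside `U`: the vertices joined
to `x₀` by a walk in `U` along which `h ≤ φ` (`cluster`). It is connected, being a union of
supports of walks from `x₀` (`cluster_connected`). A boundary vertex `y` of the cluster with
`h ≤ φ y` would extend a walk inside the cluster by one step: if `y ∈ U`, then `y` would belong to
the cluster, and if `y ∉ U`, then `y ∈ ∂U` would be joined to `x₀` by a forbidden walk.
Conversely, a walk from `x₀ ∈ K ⊆ U` to a vertex outside `U` leaves `K`, and the first vertex it
meets after doing so lies in `∂K`, where `φ < h`.
-/

open MeasureTheory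

/-- The outer vertex boundary of a set `K` of vertices: the vertices outside `K`
adjacent to some vertex of `K`. -/
def outerBoundary {V : Type*} (G : SimpleGraph V) (K : Set V) : Set V :=
  {y | y ∉ K ∧ ∃ x ∈ K, G.Adj x y}

/-- The cluster of `x₀` in `{z ∈ U | h ≤ φ z}`, as a set of vertices of `G`. It is empty if `x₀`
itself is not in that set. -/
def cluster {V : Type*} (G : SimpleGraph V) (x₀ : V) (U : Set V) (φ : V → ℝ) (h : ℝ) : Set V :=
  {v | ∃ p : G.Walk x₀ v, ∀ z ∈ p.support, z ∈ U ∧ h ≤ φ z}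

lemma cluster_connected {V : Type*} (G : SimpleGraph V) (x₀ : V) (U : Set V) (φ : V → ℝ) (h : ℝ)
    (hx : x₀ ∈ cluster G x₀ U φ h) : (G.induce (cluster G x₀ U φ h)).Connected := by
  classical
  refine G.induce_connected_of_patches x₀ hx fun {v} hv => ?_
  obtain ⟨p, hp⟩ := hv
  refine ⟨{z | z ∈ p.support}, fun z hz => ?_, p.start_mem_support, p.end_mem_support,
    p.connected_induce_support.preconnected _ _⟩
  exact ⟨p.takeUntil z hz, fun w hw => hp w (p.support_takeUntil_subset_support hz hw)⟩

/-- Lemma A.1 of the Appendix: with `U` a finite connected set of vertices containing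
`x₀`, `Δ = ∂U` its outer boundary and `Ū = U ∪ Δ`, the disconnection event
`D^h_{x₀,U}` — no path inside `Ū` from `x₀` to `Δ` along which `φ ≥ h` — occurs if and
only if either `φ(x₀) < h`, or there is a nonempty connected `K ⊆ U` containing `x₀`
with `φ < h` on the outer boundary of `K`. -/
theorem stmt7 {V : Type*} (G : SimpleGraph V)
    (hlf : ∀ v : V, (G.neighborSet v).Finite) (hconn : G.Connected)
    (x₀ : V) (U : Set V) (hUfin : U.Finite) (hx₀ : x₀ ∈ U)
    (hUconn : (G.induce U).Connected)
    (φ : V → ℝ) (h : ℝ) :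
    (¬ ∃ y ∈ outerBoundary G U, ∃ p : G.Walk x₀ y,
        ∀ z ∈ p.support, z ∈ U ∪ outerBoundary G U ∧ h ≤ φ z) ↔
      (φ x₀ < h ∨ ∃ K : Set V, K.Nonempty ∧ K ⊆ U ∧ x₀ ∈ K ∧
        (G.induce K).Connected ∧ ∀ y ∈ outerBoundary G K, φ y < h) := by
  constructor
  · intro hno
    by_cases hφ : φ x₀ < h
    · exact Or.inl hφ
    have hx : x₀ ∈ cluster G x₀ U φ h :=
      ⟨SimpleGraph.Walk.nil, fun z hz => by
        obtain rfl : z = x₀ := by simpa using hz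
        exact ⟨hx₀, not_lt.mp hφ⟩⟩
    refine Or.inr ⟨cluster G x₀ U φ h, ⟨x₀, hx⟩, ?_, hx, cluster_connected G x₀ U φ h hx, ?_⟩
    · rintro v ⟨p, hp⟩
      exact (hp v p.end_mem_support).1
    · rintro y ⟨hyK, x, ⟨p, hp⟩, hxy⟩
      by_contra! hy
      by_cases hyU : y ∈ U
      · refine hyK ⟨p.concat hxy, fun z hz => ?_⟩
        simp only [SimpleGraph.Walk.support_concat, List.mem_append, List.mem_singleton] at hz
        rcases hz with hz | rfl
        · exact hp z hz
        · exact ⟨hyU, hy⟩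
      · have hyΔ : y ∈ outerBoundary G U := ⟨hyU, x, (hp x p.end_mem_support).1, hxy⟩
        refine hno ⟨y, hyΔ, p.concat hxy, fun z hz => ?_⟩
        simp only [SimpleGraph.Walk.support_concat, List.mem_append, List.mem_singleton] at hz
        rcases hz with hz | rfl
        · exact ⟨Or.inl (hp z hz).1, (hp z hz).2⟩
        · exact ⟨Or.inr hyΔ, hy⟩
  · rintro hdisc ⟨y, hy, p, hp⟩
    rcases hdisc with hφ | ⟨K, -, hKU, hxK, -, hK⟩
    · exact (hp x₀ p.start_mem_support).2.not_gt hφ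
    · obtain ⟨d, hd, hd₁, hd₂⟩ := p.exists_boundary_dart K hxK fun hyK => hy.1 (hKU hyK)
      exact (hp d.snd (p.dart_snd_mem_support_of_mem_darts hd)).2.not_gt
        (hK d.snd ⟨hd₂, d.fst, hd₁, d.adj⟩)
end

section
/- Let G be a locally finite connected simple graph with vertex set V, x₀ ∈ V, U a finite connected subset with x₀ ∈ U, Δ the outer vertex boundary of U, and Ū = U ∪ Δ. Let (Ω, 𝒜, P) be a probability space and φ : Ū → Ω → ℝ a family of random variables such that every real linear combination Σ_x c_x φ_x is a centered Gaussian random variable, and such that 0 < Var(φ_{x₀}) ≤ g for some g > 0. Assume the following harmonic Markov property: for every nonempty connected subset K ⊆ U with x₀ ∈ K there exist weights λ^K : ∂K → ℝ with λ^K ≥ 0 and Σ_{y ∈ ∂K} λ^K_y = 1 such that the random variable ξ_K := φ_{x₀} − Σ_{y ∈ ∂K} λ^K_y φ_y is independent of the family (φ_z)_{z ∈ Ū \ K} and is a centered Gaussian variable with strictly positive variance. Then for every ε > 0, P[ there is no path inside Ū from x₀ to a vertex of Δ all of whose vertices y satisfy φ_y ≥ −ε ] ≤ (2·Φ(ε/√g))^{-1},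 where Φ(t) = N(0,1)((-∞,t]) is the standard normal cumulative distribution function. -/
/-!
Write `q = Φ(ε/√g)`, let `D` be the disconnection event, and call a connected set `K` with
`x₀ ∈ K ⊆ U` *blocked* when `φ < -ε` on all of `∂K`.

Blocked sets are stable under union (all contain `x₀`, and `∂(K ∪ K') ⊆ ∂K ∪ ∂K'`), so whenever
there is one there is a largest one, and the events `A_K = {K is the largest blocked set}` are
disjoint. Whether `A_K` occurs depends only on the values of `φ` off `K`
(`maximal_blocked_congr`), so `A_K` is independent of the centered Gaussian variable `ξ_K`.
On `A_K` the harmonic average `∑ λ_y φ_y` is `< -ε`, so `φ_{x₀} ≥ -ε` forces `ξ_K > 0`, whereas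
`ξ_K < 0` forces `φ_{x₀} < -ε`. As `ξ_K` is symmetric,
`P(A_K, φ_{x₀} ≥ -ε) ≤ P(A_K, φ_{x₀} < -ε)`.

If `D` occurs and `φ_{x₀} ≥ -ε`, the cluster of `x₀` in `{φ ≥ -ε}` is blocked
(`exists_blocked_of_not_connected`), so some `A_K` occurs. Summing over `K`,
`P(D) ≤ P(φ_{x₀} < -ε) + P(D, φ_{x₀} ≥ -ε) ≤ 2 P(φ_{x₀} < -ε) ≤ 2 (1 - q)`,
and `2 (1 - q) ≤ 1 / (2 q)` because `4 q (1 - q) ≤ 1`.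
-/

open MeasureTheory ProbabilityTheory NNReal

/-! ### Blocked sets -/

/-- `K` is a connected subset of `U` containing `x₀` such that `f < t` on the outer boundary
of `K`. -/
def Blocked {V : Type*} (G : SimpleGraph V) (U : Set V) (x₀ : V) (t : ℝ) (f : V → ℝ)
    (K : Set V) : Prop :=
  x₀ ∈ K ∧ K ⊆ U ∧ (G.induce K).Connected ∧ ∀ y ∈ outerBoundary G K, f y < t

section Graph

variable {V : Type*} {G : SimpleGraph V} {U : Set V} {x₀ : V} {t : ℝ} {f : V → ℝ}

lemma outerBoundary_finite (hlf : ∀ v : V, (G.neighborSet v).Finite) {K : Set V}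
    (hK : K.Finite) : (outerBoundary G K).Finite := by
  refine (hK.biUnion fun x _ => hlf x).subset ?_
  rintro y ⟨-, x, hx, hxy⟩
  exact Set.mem_biUnion hx hxy

lemma outerBoundary_subset {K : Set V} (hKU : K ⊆ U) :
    outerBoundary G K ⊆ (U ∪ outerBoundary G U) \ K := by
  rintro y ⟨hy, x, hx, hxy⟩
  refine ⟨?_, hy⟩
  by_cases hyU : y ∈ U
  · exact Or.inl hyU
  · exact Or.inr ⟨hyU, x, hKU hx, hxy⟩

lemma Blocked.union {K L : Set V} (hK : Blocked G U x₀ t f K) (hL : Blocked G U x₀ t f L) :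
    Blocked G U x₀ t f (K ∪ L) := by
  obtain ⟨hK0, hKU, hKc, hKb⟩ := hK
  obtain ⟨hL0, hLU, hLc, hLb⟩ := hL
  refine ⟨Or.inl hK0, Set.union_subset hKU hLU,
    SimpleGraph.induce_union_connected hKc.preconnected hLc.preconnected ⟨x₀, hK0, hL0⟩, ?_⟩
  rintro y ⟨hy, x, hx | hx, hxy⟩
  · exact hKb y ⟨fun h => hy (Or.inl h), x, hx, hxy⟩
  · exact hLb y ⟨fun h => hy (Or.inr h), x, hx, hxy⟩

lemma maximal_blocked_unique {K L : Set V} (hK : Maximal (Blocked G U x₀ t f) K)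
    (hL : Maximal (Blocked G U x₀ t f) L) : K = L := by
  apply Set.Subset.antisymm
  · exact Set.subset_union_left.trans (hL.2 (hK.1.union hL.1) Set.subset_union_right)
  · exact Set.subset_union_right.trans (hK.2 (hK.1.union hL.1) Set.subset_union_left)

lemma exists_maximal_blocked (hU : U.Finite) {K : Set V} (hK : Blocked G U x₀ t f K) :
    ∃ L, Maximal (Blocked G U x₀ t f) L := by
  have hfin : {L | Blocked G U x₀ t f L}.Finite :=
    hU.finite_subsets.subset fun L hL => hL.2.1
  exact hfin.exists_maximal ⟨K, hK⟩

/-- Being blocked and containing `K` depends only on the values off `K`. -/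
lemma Blocked.congr_off {f' : V → ℝ} {K L : Set V}
    (h : ∀ z ∈ (U ∪ outerBoundary G U) \ K, f z = f' z) (hKL : K ⊆ L)
    (hL : Blocked G U x₀ t f L) : Blocked G U x₀ t f' L := by
  obtain ⟨h0, hLU, hc, hb⟩ := hL
  refine ⟨h0, hLU, hc, fun y hy => ?_⟩
  have hy' := outerBoundary_subset hLU hy
  rw [← h y ⟨hy'.1, fun hyK => hy'.2 (hKL hyK)⟩]
  exact hb y hy

/-- Whether `K` is the largest blocked set can be read off the values outside `K`: the competing
sets contain `K`, so their boundaries avoid `K`. -/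
lemma maximal_blocked_congr {f' : V → ℝ} {K : Set V}
    (h : ∀ z ∈ (U ∪ outerBoundary G U) \ K, f z = f' z) :
    Maximal (Blocked G U x₀ t f) K ↔ Maximal (Blocked G U x₀ t f') K := by
  have h' : ∀ z ∈ (U ∪ outerBoundary G U) \ K, f' z = f z := fun z hz => (h z hz).symm
  constructor
  · intro hK
    exact ⟨hK.1.congr_off h subset_rfl, fun L hL hKL => hK.2 (hL.congr_off h' hKL) hKL⟩
  · intro hK
    exact ⟨hK.1.congr_off h' subset_rfl, fun L hL hKL => hK.2 (hL.congr_off h hKL) hKL⟩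

/-- If `f x₀ ≥ t` but no path in `{f ≥ t}` joins `x₀` to `∂U`, then the cluster of `x₀` in
`U ∩ {f ≥ t}` is blocked. -/
lemma exists_blocked_of_not_connected (hx₀ : x₀ ∈ U) (h0 : t ≤ f x₀)
    (hD : ¬ ∃ y ∈ outerBoundary G U, ∃ p : G.Walk x₀ y,
      ∀ z ∈ p.support, z ∈ U ∪ outerBoundary G U ∧ t ≤ f z) :
    ∃ K, Blocked G U x₀ t f K := by
  set K : Set V := {v | ∃ p : G.Walk x₀ v, ∀ z ∈ p.support, z ∈ U ∧ t ≤ f z} with hKdef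
  have hx₀K : x₀ ∈ K := ⟨SimpleGraph.Walk.nil, by simp [hx₀, h0]⟩
  refine ⟨K, hx₀K, ?_, ?_, ?_⟩
  · rintro v ⟨p, hp⟩
    exact (hp v p.end_mem_support).1
  · refine SimpleGraph.induce_connected_of_patches x₀ hx₀K ?_
    rintro v ⟨p, hp⟩
    refine ⟨{w | w ∈ p.support}, ?_, p.start_mem_support, p.end_mem_support,
      p.connected_induce_support.preconnected _ _⟩
    intro w hw
    classical
    exact ⟨p.takeUntil w hw, fun z hz => hp z (p.support_takeUntil_subset_support hw hz)⟩
  · rintro y ⟨hy, x, ⟨p, hp⟩, hxy⟩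
    by_contra! hty
    by_cases hyU : y ∈ U
    · refine hy ⟨p.concat hxy, fun z hz => ?_⟩
      rw [SimpleGraph.Walk.support_concat, List.mem_append, List.mem_singleton] at hz
      rcases hz with hz | rfl
      · exact hp z hz
      · exact ⟨hyU, hty⟩
    · have hyb : y ∈ outerBoundary G U := ⟨hyU, x, (hp x p.end_mem_support).1, hxy⟩
      refine hD ⟨y, hyb, p.concat hxy, fun z hz => ?_⟩
      rw [SimpleGraph.Walk.support_concat, List.mem_append, List.mem_singleton] at hz
      rcases hz with hz | rfl
      · exact ⟨Or.inl (hp z hz).1, (hp z hz).2⟩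
      · exact ⟨Or.inr hyb, hty⟩

/-! ### Measurability -/

lemma measurableSet_blocked {α : Type*} [MeasurableSpace α]
    (hlf : ∀ v : V, (G.neighborSet v).Finite) (hU : U.Finite) {F : α → V → ℝ}
    (hF : ∀ v, Measurable fun a => F a v) (K : Set V) :
    MeasurableSet {a | Blocked G U x₀ t (F a) K} := by
  by_cases hK : x₀ ∈ K ∧ K ⊆ U ∧ (G.induce K).Connected
  · have : {a | Blocked G U x₀ t (F a) K} = ⋂ y ∈ outerBoundary G K, {a | F a y < t} := by
      ext a
      simp [Blocked, hK]
    rw [this]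
    exact MeasurableSet.biInter (outerBoundary_finite hlf (hU.subset hK.2.1)).countable
      fun y _ => measurableSet_lt (hF y) measurable_const
  · have : {a | Blocked G U x₀ t (F a) K} = ∅ := by
      ext a
      simp only [Set.mem_ofPred_eq, Set.mem_empty_iff_false, iff_false]
      exact fun h => hK ⟨h.1, h.2.1, h.2.2.1⟩
    rw [this]
    exact MeasurableSet.empty

lemma measurableSet_maximal_blocked {α : Type*} [MeasurableSpace α]
    (hlf : ∀ v : V, (G.neighborSet v).Finite) (hU : U.Finite) {F : α → V → ℝ}
    (hF : ∀ v, Measurable fun a => F a v) (K : Set V) :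
    MeasurableSet {a | Maximal (Blocked G U x₀ t (F a)) K} := by
  have : {a | Maximal (Blocked G U x₀ t (F a)) K} =
      {a | Blocked G U x₀ t (F a) K} ∩
        ⋂ L ∈ {L | L ⊆ U ∧ K ⊆ L ∧ ¬ L ⊆ K}, {a | Blocked G U x₀ t (F a) L}ᶜ := by
    ext a
    simp only [Maximal, Set.mem_ofPred_eq, Set.mem_inter_iff, Set.mem_iInter, Set.mem_compl_iff]
    refine and_congr_right fun _ => ⟨fun h L hL hb => hL.2.2 (h hb hL.2.1), fun h L hb hKL => ?_⟩
    by_contra hLK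
    exact h L ⟨hb.2.1, hKL, hLK⟩ hb
  rw [this]
  refine (measurableSet_blocked hlf hU hF K).inter (MeasurableSet.biInter ?_
    fun L _ => (measurableSet_blocked hlf hU hF L).compl)
  exact (hU.finite_subsets.subset fun L hL => hL.1).countable

end Graph

open Classical in
/-- The event that `K` is the largest blocked set is the preimage of a measurable set under the
family `(φ_z)_{z ∈ Ū \ K}`. -/
lemma exists_preimage_maximal_blocked {V : Type*} {G : SimpleGraph V} {U : Set V} {x₀ : V}
    {t : ℝ} {Ω : Type*} (hlf : ∀ v : V, (G.neighborSet v).Finite) (hU : U.Finite)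
    (φ : V → Ω → ℝ) (K : Set V) :
    ∃ S : Set (↥((U ∪ outerBoundary G U) \ K) → ℝ), MeasurableSet S ∧
      {ω | Maximal (Blocked G U x₀ t fun z => φ z ω) K} =
        (fun ω => fun z : ↥((U ∪ outerBoundary G U) \ K) => φ (z : V) ω) ⁻¹' S := by
  let F : (↥((U ∪ outerBoundary G U) \ K) → ℝ) → V → ℝ :=
    fun h z => if hz : z ∈ (U ∪ outerBoundary G U) \ K then h ⟨z, hz⟩ else 0
  have hF : ∀ v, Measurable fun h => F h v := by
    intro v
    by_cases hv : v ∈ (U ∪ outerBoundary G U) \ K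
    · simp only [F, hv, dite_true]
      exact measurable_pi_apply _
    · simp only [F, hv, dite_false]
      exact measurable_const
  refine ⟨{h | Maximal (Blocked G U x₀ t (F h)) K},
    measurableSet_maximal_blocked hlf hU hF K, ?_⟩
  ext ω
  refine maximal_blocked_congr fun z hz => ?_
  simp only [F, hz, dite_true]

/-! ### Gaussian estimates -/

lemma gaussianReal_Ioi_eq_Iio (v : ℝ≥0) :
    gaussianReal 0 v (Set.Ioi 0) = gaussianReal 0 v (Set.Iio 0) := by
  conv_lhs => rw [← neg_zero (G := ℝ), ← gaussianReal_map_neg, neg_zero]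
  rw [Measure.map_apply measurable_neg measurableSet_Ioi]
  congr 1
  ext x
  simp

/-- The lower tail of a centered Gaussian increases with the variance; by symmetry, the tail for
variance `g` is `1 - Φ(ε/√g)`. -/
lemma gaussianReal_Iio_le {v : ℝ≥0} {g ε : ℝ} (hv : 0 < v) (hvg : (v : ℝ) ≤ g) (hε : 0 < ε) :
    gaussianReal 0 v (Set.Iio (-ε)) ≤ 1 - gaussianReal 0 1 (Set.Iic (ε / Real.sqrt g)) := by
  have hmap : gaussianReal 0 v = (gaussianReal 0 1).map (-Real.sqrt v * ·) := by
    rw [gaussianReal_map_const_mul]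
    congr 1
    · simp
    · ext
      simp
  rw [hmap, Measure.map_apply (measurable_const_mul _) measurableSet_Iio,
    ← prob_compl_eq_one_sub measurableSet_Iic]
  refine measure_mono fun x hx => ?_
  simp only [Set.mem_preimage, Set.mem_Iio, Set.mem_compl_iff, Set.mem_Iic, not_le] at hx ⊢
  have hv' : 0 < Real.sqrt v := Real.sqrt_pos.2 (by exact_mod_cast hv)
  have h1 : ε / Real.sqrt g ≤ ε / Real.sqrt v :=
    div_le_div_of_nonneg_left hε.le hv' (Real.sqrt_le_sqrt hvg)
  refine h1.trans_lt ?_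
  rw [div_lt_iff₀ hv']
  linarith

/-- On an event `Y ∈ S` where `X - ξ < t`, with `ξ` centered Gaussian independent of `Y`, it is at
least as likely that `X < t` as that `X ≥ t`. Used with `X = φ_{x₀}`, `t = -ε` and `Y ∈ S` the
event that `K` is the largest blocked set. -/
lemma measure_inter_le_of_indep {Ω β : Type*} [MeasurableSpace Ω] [MeasurableSpace β]
    {P : Measure Ω} {X ξ : Ω → ℝ} {Y : Ω → β} {S : Set β} {t : ℝ} {v : ℝ≥0}
    (hS : MeasurableSet S) (hind : IndepFun ξ Y P) (hξ : Measure.map ξ P = gaussianReal 0 v)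
    (hlt : ∀ ω ∈ Y ⁻¹' S, X ω - ξ ω < t) :
    P (Y ⁻¹' S ∩ {ω | t ≤ X ω}) ≤ P (Y ⁻¹' S ∩ {ω | X ω < t}) := by
  have hξm : AEMeasurable ξ P :=
    AEMeasurable.of_map_ne_zero (by rw [hξ]; exact IsProbabilityMeasure.ne_zero _)
  have hsymm : P (ξ ⁻¹' Set.Ioi 0) = P (ξ ⁻¹' Set.Iio 0) := by
    rw [← Measure.map_apply_of_aemeasurable hξm measurableSet_Ioi,
      ← Measure.map_apply_of_aemeasurable hξm measurableSet_Iio, hξ, gaussianReal_Ioi_eq_Iio]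
  calc P (Y ⁻¹' S ∩ {ω | t ≤ X ω})
      ≤ P (ξ ⁻¹' Set.Ioi 0 ∩ Y ⁻¹' S) := by
        refine measure_mono fun ω hω => ⟨?_, hω.1⟩
        have h1 := hlt ω hω.1
        have h2 : t ≤ X ω := hω.2
        simp only [Set.mem_preimage, Set.mem_Ioi]
        linarith
    _ = P (ξ ⁻¹' Set.Iio 0 ∩ Y ⁻¹' S) := by
        rw [hind.measure_inter_preimage_eq_mul _ _ measurableSet_Ioi hS,
          hind.measure_inter_preimage_eq_mul _ _ measurableSet_Iio hS, hsymm]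
    _ ≤ P (Y ⁻¹' S ∩ {ω | X ω < t}) := by
        refine measure_mono fun ω hω => ⟨hω.2, ?_⟩
        have h1 := hlt ω hω.2
        have h2 : ξ ω < 0 := hω.1
        show X ω < t
        linarith

/-- A weighted average with finitely many weights of values below `t` is below `t`. -/
lemma finsum_mul_lt {V : Type*} {B : Set V} (hB : B.Finite) {lam f : V → ℝ} {t : ℝ}
    (hsupp : ∀ y, y ∉ B → lam y = 0) (hnn : ∀ y, 0 ≤ lam y) (hsum : ∑ᶠ y, lam y = 1)
    (hf : ∀ y ∈ B, f y < t) : ∑ᶠ y, lam y * f y < t := by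
  have hs1 : Function.support lam ⊆ (hB.toFinset : Set V) := by
    intro y hy
    by_contra h
    exact hy (hsupp y (by simpa using h))
  have hs2 : Function.support (fun y => lam y * f y) ⊆ (hB.toFinset : Set V) :=
    fun y hy => hs1 (left_ne_zero_of_mul hy)
  rw [finsum_eq_sum_of_support_subset _ hs1] at hsum
  rw [finsum_eq_sum_of_support_subset _ hs2]
  have ht : t = ∑ y ∈ hB.toFinset, lam y * t := by rw [← Finset.sum_mul, hsum, one_mul]
  rw [ht]
  have hle : ∀ y ∈ hB.toFinset, lam y * f y ≤ lam y * t := fun y hy =>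
    mul_le_mul_of_nonneg_left (hf y (by simpa using hy)).le (hnn y)
  refine Finset.sum_lt_sum hle ?_
  obtain ⟨y, hy, hy0⟩ := Finset.exists_ne_zero_of_sum_ne_zero (hsum.trans_ne one_ne_zero)
  exact ⟨y, hy, mul_lt_mul_of_pos_left (hf y (by simpa using hy))
    ((hnn y).lt_of_ne (Ne.symm hy0))⟩

/-! ### The disconnection bound -/

/-- The quantitative disconnection bound (A.13) of Proposition A.2: for a centered
Gaussian family `(φ_x)_{x ∈ Ū}` with `0 < Var(φ_{x₀}) ≤ g` satisfying the harmonic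
Markov property, for every `ε > 0` the probability that `x₀` is not connected to
`Δ = ∂U` inside `Ū = U ∪ Δ` by a path on which `φ ≥ −ε` is at most
`(2·Φ(ε/√g))⁻¹`. -/
theorem stmt9 {V : Type*} (G : SimpleGraph V)
    (hlf : ∀ v : V, (G.neighborSet v).Finite) (hconn : G.Connected)
    (x₀ : V) (U : Set V) (hUfin : U.Finite) (hx₀U : x₀ ∈ U)
    (hUconn : (G.induce U).Connected)
    {Ω : Type*} [MeasurableSpace Ω] (P : Measure Ω) [IsProbabilityMeasure P]
    (φ : V → Ω → ℝ) (g : ℝ) (hg : 0 < g)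
    (hGauss : ∀ c : V → ℝ, (∀ x, x ∉ U ∪ outerBoundary G U → c x = 0) →
      ∃ v : ℝ≥0, Measure.map (fun ω => ∑ᶠ x, c x * φ x ω) P = gaussianReal 0 v)
    (hvarpos : 0 < variance (φ x₀) P)
    (hvarle : variance (φ x₀) P ≤ g)
    (hMarkov : ∀ K : Set V, K.Nonempty → K ⊆ U → x₀ ∈ K → (G.induce K).Connected →
      ∃ lam : V → ℝ, (∀ y, y ∉ outerBoundary G K → lam y = 0) ∧ (∀ y, 0 ≤ lam y) ∧
        (∑ᶠ y, lam y) = 1 ∧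
        IndepFun (fun ω => φ x₀ ω - ∑ᶠ y, lam y * φ y ω)
          (fun ω => fun z : ↥((U ∪ outerBoundary G U) \ K) => φ (z : V) ω) P ∧
        ∃ v : ℝ≥0, 0 < v ∧
          Measure.map (fun ω => φ x₀ ω - ∑ᶠ y, lam y * φ y ω) P = gaussianReal 0 v) :
    ∀ ε : ℝ, 0 < ε →
      P {ω | ¬ ∃ y ∈ outerBoundary G U, ∃ p : G.Walk x₀ y,
          ∀ z ∈ p.support, z ∈ U ∪ outerBoundary G U ∧ -ε ≤ φ z ω}
        ≤ ENNReal.ofReal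
            (2 * ((gaussianReal 0 1) (Set.Iic (ε / Real.sqrt g))).toReal)⁻¹ := by
  intro ε hε
  have hlaw : ∀ x ∈ U ∪ outerBoundary G U, ∃ v : ℝ≥0, Measure.map (φ x) P = gaussianReal 0 v := by
    intro x hx
    classical
    obtain ⟨v, hv⟩ := hGauss (fun z => if z = x then 1 else 0)
      (fun z hz => if_neg (by rintro rfl; exact hz hx))
    refine ⟨v, ?_⟩
    rw [← hv]
    congr 1
    funext ω
    rw [finsum_eq_single _ x (fun z hz => by simp [hz])]
    simp
  have hmeas : ∀ x ∈ U ∪ outerBoundary G U, AEMeasurable (φ x) P := by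
    intro x hx
    obtain ⟨v, hv⟩ := hlaw x hx
    exact AEMeasurable.of_map_ne_zero (by rw [hv]; exact IsProbabilityMeasure.ne_zero _)
  have hx₀m : AEMeasurable (φ x₀) P := hmeas x₀ (Or.inl hx₀U)
  set q : ENNReal := gaussianReal 0 1 (Set.Iic (ε / Real.sqrt g)) with hq
  set Low : Set Ω := {ω | φ x₀ ω < -ε} with hLow
  have hLowP : P Low ≤ 1 - q := by
    obtain ⟨v, hv⟩ := hlaw x₀ (Or.inl hx₀U)
    have hvar : variance (φ x₀) P = v := by
      have := variance_map (X := id) (Y := φ x₀) (μ := P) aemeasurable_id hx₀m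
      rw [hv, variance_id_gaussianReal, Function.id_comp] at this
      exact this.symm
    rw [hvar] at hvarpos hvarle
    have h := gaussianReal_Iio_le (by exact_mod_cast hvarpos) hvarle hε
    rw [← hv, Measure.map_apply_of_aemeasurable hx₀m measurableSet_Iio] at h
    exact h
  let A : Set V → Set Ω := fun K => {ω | Maximal (Blocked G U x₀ (-ε) fun z => φ z ω) K}
  have hAnull : ∀ K, NullMeasurableSet (A K) P := by
    intro K
    obtain ⟨S, hS, hAS⟩ := exists_preimage_maximal_blocked (x₀ := x₀) (t := -ε) hlf hUfin φ K
    have hfin : ((U ∪ outerBoundary G U) \ K).Finite :=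
      (hUfin.union (outerBoundary_finite hlf hUfin)).subset Set.sdiff_subset
    have : Countable ↥((U ∪ outerBoundary G U) \ K) := hfin.countable.to_subtype
    simp only [A]
    rw [hAS]
    have hpi : AEMeasurable
        (fun ω => fun z : ↥((U ∪ outerBoundary G U) \ K) => φ (z : V) ω) P :=
      aemeasurable_pi_lambda _ fun z => hmeas z z.2.1
    exact hpi.nullMeasurable hS
  have hAsymm : ∀ K, P (A K ∩ {ω | -ε ≤ φ x₀ ω}) ≤ P (A K ∩ Low) := by
    intro K
    by_cases hK : x₀ ∈ K ∧ K ⊆ U ∧ (G.induce K).Connected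
    · obtain ⟨hK0, hKU, hKc⟩ := hK
      obtain ⟨lam, hsupp, hnn, hsum, hind, v, -, hξ⟩ := hMarkov K ⟨x₀, hK0⟩ hKU hK0 hKc
      obtain ⟨S, hS, hAS⟩ := exists_preimage_maximal_blocked (x₀ := x₀) (t := -ε) hlf hUfin φ K
      simp only [A]
      rw [hAS]
      refine measure_inter_le_of_indep hS hind hξ fun ω hω => ?_
      rw [← hAS] at hω
      have := finsum_mul_lt (outerBoundary_finite hlf (hUfin.subset hKU)) hsupp hnn hsum
        (f := fun y => φ y ω) hω.1.2.2.2
      linarith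
    · have hempty : A K = ∅ := by
        refine Set.eq_empty_of_forall_notMem fun ω hω => hK ?_
        exact ⟨hω.1.1, hω.1.2.1, hω.1.2.2.1⟩
      simp [hempty]
  have hLownull : NullMeasurableSet Low P := hx₀m.nullMeasurable measurableSet_Iio
  have hfin := hUfin.finite_subsets
  set T : Finset (Set V) := hfin.toFinset with hT
  set D : Set Ω := {ω | ¬ ∃ y ∈ outerBoundary G U, ∃ p : G.Walk x₀ y,
          ∀ z ∈ p.support, z ∈ U ∪ outerBoundary G U ∧ -ε ≤ φ z ω} with hD
  have hcover : D ⊆ Low ∪ ⋃ K ∈ T, A K ∩ {ω | -ε ≤ φ x₀ ω} := by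
    intro ω hω
    by_cases h0 : -ε ≤ φ x₀ ω
    · right
      obtain ⟨K, hK⟩ := exists_blocked_of_not_connected (f := fun z => φ z ω) hx₀U h0 hω
      obtain ⟨L, hL⟩ := exists_maximal_blocked hUfin hK
      exact Set.mem_biUnion (show L ∈ (T : Set (Set V)) by simpa [hT] using hL.1.2.1) ⟨hL, h0⟩
    · exact Or.inl (not_le.1 h0)
  have hP : P D ≤ (1 - q) + (1 - q) := by
    calc P D ≤ P Low + ∑ K ∈ T, P (A K ∩ {ω | -ε ≤ φ x₀ ω}) :=
          (measure_mono hcover).trans ((measure_union_le _ _).trans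
            (add_le_add le_rfl (measure_biUnion_finset_le _ _)))
      _ ≤ P Low + ∑ K ∈ T, P (A K ∩ Low) := add_le_add le_rfl (Finset.sum_le_sum fun K _ => hAsymm K)
      _ = P Low + P (⋃ K ∈ T, A K ∩ Low) := by
          rw [measure_biUnion_finset₀]
          · intro K _ L _ hKL
            refine Disjoint.aedisjoint (Set.disjoint_left.2 fun ω h1 h2 => hKL ?_)
            exact maximal_blocked_unique h1.1 h2.1
          · exact fun K _ => (hAnull K).inter hLownull
      _ ≤ P Low + P Low := by
          gcongr
          exact Set.iUnion₂_subset fun K _ => Set.inter_subset_right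
      _ ≤ _ := add_le_add hLowP hLowP
  have hq1 : q ≤ 1 := prob_le_one
  have hqtop : q ≠ ⊤ := ne_top_of_le_ne_top ENNReal.one_ne_top hq1
  have hqr : q = ENNReal.ofReal q.toReal := (ENNReal.ofReal_toReal hqtop).symm
  have hqr1 : q.toReal ≤ 1 := ENNReal.toReal_le_of_le_ofReal zero_le_one (by simpa using hq1)
  -- A Gaussian density is positive, so `q > 0`; otherwise the right-hand side would be `0⁻¹ = 0`.
  have hqpos : 0 < q.toReal := by
    refine ENNReal.toReal_pos (fun h => ?_) hqtop
    have := gaussianReal_absolutelyContinuous' 0 one_ne_zero h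
    simp at this
  have hfinal : (1 - q) + (1 - q) = ENNReal.ofReal ((1 - q.toReal) + (1 - q.toReal)) := by
    rw [ENNReal.ofReal_add (by linarith) (by linarith), ENNReal.ofReal_sub _ hqpos.le,
      ← hqr, ENNReal.ofReal_one]
  refine hP.trans ?_
  rw [hfinal]
  refine ENNReal.ofReal_le_ofReal ?_
  rw [inv_eq_one_div, le_div_iff₀ (by linarith)]
  nlinarith [sq_nonneg (2 * q.toReal - 1)]
end

section
/- Let N be a natural number, A > 0, and let σ, α : Fin N → ℝ satisfy 0 ≤ σ_i ≤ A + 2 for all i and 0 ≤ α_k ≤ (A+2)/(A+3) for all k. Then Σ_{i} σ_i · ( 1 + 2 · Σ_{j > i} Π_{i < k ≤ j} α_k ) ≤ N·(A+2)·(2A+5). -/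
/-!
With `r = (A+2)/(A+3) < 1`, each product over `i < k ≤ j` is at most `r ^ (j - i)`, so every inner
sum is dominated by the geometric series `∑_{m ≥ 1} r ^ m = r / (1 - r) = A + 2`. Each of the `N`
outer terms is therefore at most `(A + 2) (1 + 2 (A + 2)) = (A + 2) (2A + 5)`.
-/

lemma sum_Ioi_pow_le {N : ℕ} (i : Fin N) {r : ℝ} (h0 : 0 ≤ r) (h1 : r < 1) :
    ∑ j ∈ Finset.Ioi i, r ^ ((j : ℕ) - (i : ℕ)) ≤ r * (1 - r)⁻¹ := by
  have hfactor : ∑ j ∈ Finset.Ioi i, r ^ ((j : ℕ) - (i : ℕ))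
      = r * ∑ j ∈ Finset.Ioi i, r ^ ((j : ℕ) - (i : ℕ) - 1) := by
    rw [Finset.mul_sum]
    refine Finset.sum_congr rfl fun j hj => ?_
    have hij : i < j := Finset.mem_Ioi.mp hj
    rw [← pow_succ']
    congr 1
    omega
  -- The shift `j ↦ j - i - 1` is injective on `j > i`, so these are distinct geometric terms.
  have hinj : Set.InjOn (fun j : Fin N => (j : ℕ) - (i : ℕ) - 1) (Finset.Ioi i) := by
    intro a ha b hb hab
    have ha' : i < a := Finset.mem_Ioi.mp (Finset.mem_coe.mp ha)
    have hb' : i < b := Finset.mem_Ioi.mp (Finset.mem_coe.mp hb)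
    apply Fin.ext
    simp only at hab
    omega
  rw [hfactor, ← tsum_geometric_of_lt_one h0 h1,
    ← Finset.sum_image (f := fun m => r ^ m) hinj]
  exact mul_le_mul_of_nonneg_left
    ((summable_geometric_of_lt_one h0 h1).sum_le_tsum _ fun m _ => pow_nonneg h0 m) h0

/-- The variance estimate (3.19)–(3.21) in the proof of Proposition 3.2: if
`0 ≤ σ_i ≤ A+2` and `0 ≤ α_k ≤ (A+2)/(A+3)` for indices in `Fin N`, then
`Σ_i σ_i (1 + 2 Σ_{j>i} Π_{i<k≤j} α_k) ≤ N (A+2)(2A+5)`. -/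
theorem stmt11 (N : ℕ) (A : ℝ) (hA : 0 < A) (σ α : Fin N → ℝ)
    (hσ : ∀ i, 0 ≤ σ i ∧ σ i ≤ A + 2)
    (hα : ∀ k, 0 ≤ α k ∧ α k ≤ (A + 2) / (A + 3)) :
    ∑ i : Fin N, σ i * (1 + 2 * ∑ j ∈ Finset.Ioi i, ∏ k ∈ Finset.Ioc i j, α k)
      ≤ (N : ℝ) * (A + 2) * (2 * A + 5) := by
  have h0 : 0 ≤ (A + 2) / (A + 3) := by positivity
  have h1 : (A + 2) / (A + 3) < 1 := by
    rw [div_lt_one (by linarith)]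
    linarith
  have hr : (A + 2) / (A + 3) * (1 - (A + 2) / (A + 3))⁻¹ = A + 2 := by
    have h3 : A + 3 ≠ 0 := by positivity
    have : 1 - (A + 2) / (A + 3) = (A + 3)⁻¹ := by
      field_simp
      ring
    rw [this, inv_inv, div_mul_cancel₀ _ h3]
  have hterm : ∀ i ∈ (Finset.univ : Finset (Fin N)),
      σ i * (1 + 2 * ∑ j ∈ Finset.Ioi i, ∏ k ∈ Finset.Ioc i j, α k)
        ≤ (A + 2) * (2 * A + 5) := by
    intro i _
    have hle : ∑ j ∈ Finset.Ioi i, ∏ k ∈ Finset.Ioc i j, α k ≤ A + 2 := by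
      rw [← hr]
      refine le_trans (Finset.sum_le_sum fun j _ => ?_) (sum_Ioi_pow_le i h0 h1)
      rw [← Fin.card_Ioc, ← Finset.prod_const]
      exact Finset.prod_le_prod (fun k _ => (hα k).1) fun k _ => (hα k).2
    have hnonneg : 0 ≤ ∑ j ∈ Finset.Ioi i, ∏ k ∈ Finset.Ioc i j, α k :=
      Finset.sum_nonneg fun j _ => Finset.prod_nonneg fun k _ => (hα k).1
    exact mul_le_mul (hσ i).2 (by linarith) (by linarith) (by linarith)
  calc _ ≤ ∑ _i : Fin N, (A + 2) * (2 * A + 5) := Finset.sum_le_sum hterm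
    _ = (N : ℝ) * (A + 2) * (2 * A + 5) := by
      simp [mul_assoc]
end

section
/- Let V be a type with a root x₀ : V, a depth function depth : V → ℕ with depth x₀ = 0, and a parent map par : V → V with par x₀ = x₀ and depth v = depth(par v) + 1 for every v ≠ x₀; assume for every v the set of children C(v) = {w ≠ x₀ : par w = v} is finite. Let α : V → ℝ satisfy 0 < α_v ≤ 1 for all v, and fix h ∈ ℝ. Suppose q : ℕ → V → ℝ → ℝ satisfies the recursion: q_n(x)(a) = 1 whenever a < h; q_n(x)(a) = 0 whenever a ≥ h and depth x = n; and q_n(x)(a) = Π_{y ∈ C(x)} ∫ q_n(y)(α_y·a + √(α_y)·t) dγ(t) whenever a ≥ h and depth x < n (an empty product being 1). Then for every x ∈ V and every n ≥ depth x: the function a ↦ q_n(x)(a) is non-increasing, takes values in [0,1], equals 1 on (-∞,h), and satisfies q_n(x)(a) ≤ q_{n+1}(x)(a) for all a ∈ ℝ. -/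
open MeasureTheory ProbabilityTheory

/-!
Everything rests on the Gaussian averaging operator `f ↦ (a ↦ ∫ f (c a + s t) dγ(t))` with `c ≥ 0`.
On antitone functions with values in `[0,1]`, which are measurable and bounded and hence integrable,
it preserves antitonicity and the range `[0,1]`, and it is monotone in `f`. Finite products of
`[0,1]`-valued antitone functions are again of this kind, and replacing such a function by `1` on
`(-∞,h)` keeps it antitone. Induction on the distance `n - depth x` to the boundary level thus gives
antitonicity and the range (`antitone_and_mem_Icc`). A second induction of the same kind compares
`q n x` with `q (n + 1) x`: at the boundary it reads `0 ≤ q (n + 1) x a`, and inside it follows from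
monotonicity of averages and products of nonnegative factors.
-/

lemma integrable_gaussian_affine {f : ℝ → ℝ} (hf : Antitone f)
    (hb : ∀ a, f a ∈ Set.Icc (0:ℝ) 1) (b s : ℝ) :
    Integrable (fun t => f (b + s * t)) (gaussianReal 0 1) := by
  refine Integrable.of_bound (C := 1) ?_ (Filter.Eventually.of_forall fun t => ?_)
  · exact (hf.measurable.comp (by fun_prop)).aestronglyMeasurable
  · rw [Real.norm_of_nonneg (hb _).1]
    exact (hb _).2

lemma gaussian_average_mem_Icc {f : ℝ → ℝ} (hf : Antitone f)
    (hb : ∀ a, f a ∈ Set.Icc (0:ℝ) 1) (b s : ℝ) :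
    ∫ t, f (b + s * t) ∂(gaussianReal 0 1) ∈ Set.Icc (0:ℝ) 1 := by
  refine ⟨integral_nonneg fun t => (hb _).1, ?_⟩
  have := integral_mono (integrable_gaussian_affine hf hb b s)
    (integrable_const (1:ℝ)) (fun t => (hb (b + s * t)).2)
  simpa using this

/-- Antitonicity and the range `[0,1]`, by induction on the distance from `x` to the boundary
level `n`. -/
lemma antitone_and_mem_Icc {V : Type*} (x₀ : V) (depth : V → ℕ) (par : V → V)
    (hdepth : ∀ v : V, v ≠ x₀ → depth v = depth (par v) + 1)
    (hfin : ∀ v : V, {w : V | w ≠ x₀ ∧ par w = v}.Finite)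
    (α : V → ℝ) (hα : ∀ v, 0 < α v ∧ α v ≤ 1) (h : ℝ)
    (q : ℕ → V → ℝ → ℝ)
    (hq1 : ∀ n x a, a < h → q n x a = 1)
    (hq2 : ∀ n x a, h ≤ a → depth x = n → q n x a = 0)
    (hq3 : ∀ n x a, h ≤ a → depth x < n →
      q n x a = ∏ᶠ y ∈ {w : V | w ≠ x₀ ∧ par w = x},
        ∫ t, q n y (α y * a + Real.sqrt (α y) * t) ∂(gaussianReal 0 1)) (k : ℕ) :
    ∀ x : V, ∀ n : ℕ, n = depth x + k →
      Antitone (q n x) ∧ (∀ a, q n x a ∈ Set.Icc (0:ℝ) 1) := by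
  induction k with
  | zero =>
    intro x n hn
    have hb : ∀ a, q n x a ∈ Set.Icc (0:ℝ) 1 := by
      intro a
      rcases lt_or_ge a h with ha | ha
      · simp [hq1 n x a ha]
      · simp [hq2 n x a ha hn.symm]
    refine ⟨fun a b hab => ?_, hb⟩
    rcases lt_or_ge a h with ha | ha
    · rw [hq1 n x a ha]
      exact (hb b).2
    · rw [hq2 n x b (ha.trans hab) hn.symm]
      exact (hb a).1
  | succ k ih =>
    intro x n hn
    have hlt : depth x < n := by omega
    have ihy : ∀ y ∈ (hfin x).toFinset,
        Antitone (q n y) ∧ (∀ a, q n y a ∈ Set.Icc (0:ℝ) 1) := by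
      intro y hy
      obtain ⟨hy0, rfl⟩ := (hfin x).mem_toFinset.1 hy
      exact ih y n (by rw [hdepth y hy0]; omega)
    have hI := fun a y hy =>
      gaussian_average_mem_Icc (ihy y hy).1 (ihy y hy).2 (α y * a) (Real.sqrt (α y))
    have hb : ∀ a, q n x a ∈ Set.Icc (0:ℝ) 1 := by
      intro a
      rcases lt_or_ge a h with ha | ha
      · simp [hq1 n x a ha]
      · rw [hq3 n x a ha hlt, finprod_mem_eq_finite_toFinset_prod _ (hfin x)]
        exact ⟨Finset.prod_nonneg fun y hy => (hI a y hy).1,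
          Finset.prod_le_one (fun y hy => (hI a y hy).1) (fun y hy => (hI a y hy).2)⟩
    refine ⟨fun a b hab => ?_, hb⟩
    rcases lt_or_ge a h with ha | ha
    · rw [hq1 n x a ha]
      exact (hb b).2
    · rw [hq3 n x a ha hlt, hq3 n x b (ha.trans hab) hlt,
        finprod_mem_eq_finite_toFinset_prod _ (hfin x),
        finprod_mem_eq_finite_toFinset_prod _ (hfin x)]
      refine Finset.prod_le_prod (fun y hy => (hI b y hy).1) fun y hy => ?_
      refine integral_mono (integrable_gaussian_affine (ihy y hy).1 (ihy y hy).2 _ _)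
        (integrable_gaussian_affine (ihy y hy).1 (ihy y hy).2 _ _) fun t => ?_
      apply (ihy y hy).1
      have := mul_le_mul_of_nonneg_left hab (hα y).1.le
      linarith

/-- The deterministic part of Lemma 1.2 concerning the functions `q^n_{x,h}` defined by
the recursion (1.21) from the boundary level `n` toward the root of a locally finite
rooted tree: for `n ≥ depth x`, the function `a ↦ q_n(x)(a)` is non-increasing,
`[0,1]`-valued, equals `1` on `(-∞,h)`, and is non-decreasing in `n`. -/
theorem stmt15 {V : Type*} (x₀ : V) (depth : V → ℕ) (par : V → V)
    (hroot : depth x₀ = 0) (hpar : par x₀ = x₀)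
    (hdepth : ∀ v : V, v ≠ x₀ → depth v = depth (par v) + 1)
    (hfin : ∀ v : V, {w : V | w ≠ x₀ ∧ par w = v}.Finite)
    (α : V → ℝ) (hα : ∀ v, 0 < α v ∧ α v ≤ 1) (h : ℝ)
    (q : ℕ → V → ℝ → ℝ)
    (hq1 : ∀ n x a, a < h → q n x a = 1)
    (hq2 : ∀ n x a, h ≤ a → depth x = n → q n x a = 0)
    (hq3 : ∀ n x a, h ≤ a → depth x < n →
      q n x a = ∏ᶠ y ∈ {w : V | w ≠ x₀ ∧ par w = x},
        ∫ t, q n y (α y * a + Real.sqrt (α y) * t) ∂(gaussianReal 0 1)) :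
    ∀ x : V, ∀ n : ℕ, depth x ≤ n →
      Antitone (q n x) ∧ (∀ a, q n x a ∈ Set.Icc (0:ℝ) 1) ∧
        (∀ a < h, q n x a = 1) ∧ (∀ a, q n x a ≤ q (n + 1) x a) := by
  have key : ∀ (x : V) (n : ℕ), depth x ≤ n →
      Antitone (q n x) ∧ (∀ a, q n x a ∈ Set.Icc (0:ℝ) 1) := fun x n hn =>
    antitone_and_mem_Icc x₀ depth par hdepth hfin α hα h q hq1 hq2 hq3 (n - depth x) x n
      (by omega)
  have mono : ∀ (k : ℕ) (x : V) (n : ℕ), n = depth x + k →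
      ∀ a, q n x a ≤ q (n + 1) x a := by
    intro k
    induction k with
    | zero =>
      intro x n hn a
      rcases lt_or_ge a h with ha | ha
      · rw [hq1 n x a ha, hq1 (n + 1) x a ha]
      · rw [hq2 n x a ha hn.symm]
        exact ((key x (n + 1) (by omega)).2 a).1
    | succ k ih =>
      intro x n hn a
      rcases lt_or_ge a h with ha | ha
      · rw [hq1 n x a ha, hq1 (n + 1) x a ha]
      · rw [hq3 n x a ha (by omega), hq3 (n + 1) x a ha (by omega),
          finprod_mem_eq_finite_toFinset_prod _ (hfin x),
          finprod_mem_eq_finite_toFinset_prod _ (hfin x)]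
        have hd : ∀ y ∈ (hfin x).toFinset, depth y = depth x + 1 := by
          intro y hy
          obtain ⟨hy0, rfl⟩ := (hfin x).mem_toFinset.1 hy
          exact hdepth y hy0
        refine Finset.prod_le_prod (fun y hy => ?_) fun y hy => ?_
        · have hy' := hd y hy
          obtain ⟨h1, h2⟩ := key y n (by omega)
          exact (gaussian_average_mem_Icc h1 h2 _ _).1
        · have hy' := hd y hy
          obtain ⟨h1, h2⟩ := key y n (by omega)
          obtain ⟨h3, h4⟩ := key y (n + 1) (by omega)
          exact integral_mono (integrable_gaussian_affine h1 h2 _ _)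
            (integrable_gaussian_affine h3 h4 _ _) fun t => ih y n (by omega) _
  intro x n hn
  exact ⟨(key x n hn).1, (key x n hn).2, fun a ha => hq1 n x a ha,
    mono (n - depth x) x n (by omega)⟩
end

section
/- Let V be a type with a root x₀ : V, a depth function depth : V → ℕ with depth x₀ = 0, and a parent map par : V → V with par x₀ = x₀ and depth v = depth(par v) + 1 for every v ≠ x₀; assume for every v the set of children C(v) = {w ≠ x₀ : par w = v} is finite. Let α : V → ℝ satisfy 0 < α_v ≤ 1 for all v, and fix h ∈ ℝ. Suppose q : ℕ → V → ℝ → ℝ satisfies the recursion: q_n(x)(a) = 1 whenever a < h; q_n(x)(a) = 0 whenever a ≥ h and depth x = n; and q_n(x)(a) = Π_{y ∈ C(x)} ∫ q_n(y)(α_y·a + √(α_y)·t) dγ(t) whenever a ≥ h and depth x < n (an empty product being 1). Then there exists Q : V → ℝ → ℝ such that for every x ∈ V and a ∈ ℝ, q_n(x)(a) → Q(x)(a) as n → ∞; moreover each Q(x) is non-increasing with values in [0,1], equals 1 on (-∞,h), and satisfies the fixed-point equation Q(x)(a) = Π_{y ∈ C(x)} ∫ Q(y)(α_y·a + √(α_y)·t)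 dγ(t) for all a ≥ h. -/
/-!
For `n` at least the depth of `x`, the function `q n x` is non-increasing, takes values in `[0,1]`
and increases with `n`. All three facts follow by induction on `n - depth x`: the recursion
expresses `q n x` on `[h,∞)` through its values at the children of `x`, whose depth is one larger,
and both the Gaussian average `gaussAvg` and finite products preserve monotonicity and the bounds
(`gaussAvg_antitone`, `gaussAvg_mem_Icc`, `gaussAvg_mono`). At depth exactly `n` the function
`q n x` is the indicator of `(-∞,h)`, the smallest function in play, which starts the induction for
the monotonicity in `n`.

A bounded increasing sequence converges, which gives the limit `Q`. Monotonicity and bounds pass to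
the limit pointwise, and the fixed-point equation follows from the recursion by dominated
convergence in each factor (`gaussAvg_tendsto`), since the products are finite. The values of
`q n x` with `n < depth x` are unconstrained but are irrelevant to the limit.
-/

open MeasureTheory ProbabilityTheory

/-- The Gaussian average `a ↦ E[f (c a + √c Z)]` with `Z` standard normal: the operator `Q^c`
applied to `f`. -/
noncomputable def gaussAvg (c : ℝ) (f : ℝ → ℝ) (a : ℝ) : ℝ :=
  ∫ t, f (c * a + Real.sqrt c * t) ∂(gaussianReal 0 1)

/-- A non-increasing `[0,1]`-valued function is Borel and bounded, hence Gaussian-integrable after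
an affine change of variables. -/
lemma integrable_of_antitone_Icc {f : ℝ → ℝ} (hf : Antitone f)
    (hb : ∀ a, f a ∈ Set.Icc (0 : ℝ) 1) (b c : ℝ) :
    Integrable (fun t => f (b + c * t)) (gaussianReal 0 1) := by
  refine Integrable.of_bound (C := 1) ?_ ?_
  · exact (hf.measurable.comp (by fun_prop : Measurable fun t : ℝ => b + c * t)).aestronglyMeasurable
  · refine Filter.Eventually.of_forall fun t => ?_
    rw [Real.norm_eq_abs, abs_of_nonneg (hb _).1]
    exact (hb _).2

lemma gaussAvg_mem_Icc {f : ℝ → ℝ} (hf : Antitone f)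
    (hb : ∀ a, f a ∈ Set.Icc (0 : ℝ) 1) (c a : ℝ) : gaussAvg c f a ∈ Set.Icc (0 : ℝ) 1 := by
  refine ⟨integral_nonneg fun t => (hb _).1, ?_⟩
  calc gaussAvg c f a ≤ ∫ _, (1 : ℝ) ∂(gaussianReal 0 1) :=
        integral_mono (integrable_of_antitone_Icc hf hb _ _) (integrable_const _) fun t => (hb _).2
    _ = 1 := by simp

lemma gaussAvg_antitone {f : ℝ → ℝ} (hf : Antitone f)
    (hb : ∀ a, f a ∈ Set.Icc (0 : ℝ) 1) {c : ℝ} (hc : 0 ≤ c) : Antitone (gaussAvg c f) := by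
  intro a b hab
  refine integral_mono (integrable_of_antitone_Icc hf hb _ _)
    (integrable_of_antitone_Icc hf hb _ _) fun t => hf ?_
  gcongr

lemma gaussAvg_mono {f g : ℝ → ℝ} (hf : Antitone f) (hfb : ∀ a, f a ∈ Set.Icc (0 : ℝ) 1)
    (hg : Antitone g) (hgb : ∀ a, g a ∈ Set.Icc (0 : ℝ) 1) (hfg : ∀ a, f a ≤ g a) (c a : ℝ) :
    gaussAvg c f a ≤ gaussAvg c g a :=
  integral_mono (integrable_of_antitone_Icc hf hfb _ _)
    (integrable_of_antitone_Icc hg hgb _ _) fun _ => hfg _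

lemma gaussAvg_tendsto {F : ℕ → ℝ → ℝ} {f : ℝ → ℝ}
    (hF : ∀ᶠ n in Filter.atTop, Antitone (F n) ∧ ∀ a, F n a ∈ Set.Icc (0 : ℝ) 1)
    (hlim : ∀ a, Filter.Tendsto (fun n => F n a) Filter.atTop (nhds (f a))) (c a : ℝ) :
    Filter.Tendsto (fun n => gaussAvg c (F n) a) Filter.atTop (nhds (gaussAvg c f a)) := by
  refine tendsto_integral_filter_of_dominated_convergence (fun _ => (1 : ℝ)) ?_ ?_
    (integrable_const _) (Filter.Eventually.of_forall fun t => hlim _)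
  · filter_upwards [hF] with n hn
    exact (integrable_of_antitone_Icc hn.1 hn.2 _ _).aestronglyMeasurable
  · filter_upwards [hF] with n hn
    refine Filter.Eventually.of_forall fun t => ?_
    rw [Real.norm_eq_abs, abs_of_nonneg (hn.2 _).1]
    exact (hn.2 _).2

/-- The convergence statement and fixed-point equation (1.23) of Lemma 1.2: the
functions `q^n_{x,h}` defined by the recursion (1.21) converge as `n → ∞` to limits
`Q(x)` which are non-increasing, `[0,1]`-valued, equal to `1` on `(-∞,h)`, and satisfy
`Q(x)(a) = Π_{y⁻ = x} Q^{α_y}(Q(y))(a)` for `a ≥ h`. -/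
theorem stmt16 {V : Type*} (x₀ : V) (depth : V → ℕ) (par : V → V)
    (hroot : depth x₀ = 0) (hpar : par x₀ = x₀)
    (hdepth : ∀ v : V, v ≠ x₀ → depth v = depth (par v) + 1)
    (hfin : ∀ v : V, {w : V | w ≠ x₀ ∧ par w = v}.Finite)
    (α : V → ℝ) (hα : ∀ v, 0 < α v ∧ α v ≤ 1) (h : ℝ)
    (q : ℕ → V → ℝ → ℝ)
    (hq1 : ∀ n x a, a < h → q n x a = 1)
    (hq2 : ∀ n x a, h ≤ a → depth x = n → q n x a = 0)
    (hq3 : ∀ n x a, h ≤ a → depth x < n →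
      q n x a = ∏ᶠ y ∈ {w : V | w ≠ x₀ ∧ par w = x},
        ∫ t, q n y (α y * a + Real.sqrt (α y) * t) ∂(gaussianReal 0 1)) :
    ∃ Q : V → ℝ → ℝ,
      (∀ x a, Filter.Tendsto (fun n => q n x a) Filter.atTop (nhds (Q x a))) ∧
      (∀ x, Antitone (Q x)) ∧
      (∀ x a, Q x a ∈ Set.Icc (0:ℝ) 1) ∧
      (∀ x, ∀ a < h, Q x a = 1) ∧
      (∀ x a, h ≤ a →
        Q x a = ∏ᶠ y ∈ {w : V | w ≠ x₀ ∧ par w = x},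
          ∫ t, Q y (α y * a + Real.sqrt (α y) * t) ∂(gaussianReal 0 1)) := by
  have hchild : ∀ x y, y ∈ (hfin x).toFinset → depth y = depth x + 1 := by
    intro x y hy
    obtain ⟨hy0, hyx⟩ := (hfin x).mem_toFinset.1 hy
    rw [hdepth y hy0, hyx]
  have hrec : ∀ n x a, h ≤ a → depth x < n →
      q n x a = ∏ y ∈ (hfin x).toFinset, gaussAvg (α y) (q n y) a := by
    intro n x a ha hx
    rw [hq3 n x a ha hx, finprod_mem_eq_finite_toFinset_prod _ (hfin x)]
    rfl
  have hreg : ∀ k n x, depth x + k = n →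
      Antitone (q n x) ∧ ∀ a, q n x a ∈ Set.Icc (0 : ℝ) 1 := by
    intro k
    induction k with
    | zero =>
      intro n x hx
      have hval : ∀ a, q n x a ∈ Set.Icc (0 : ℝ) 1 := by
        intro a
        rcases lt_or_ge a h with ha | ha
        · simp [hq1 n x a ha]
        · simp [hq2 n x a ha hx]
      refine ⟨fun a b hab => ?_, hval⟩
      rcases lt_or_ge a h with ha | ha
      · rw [hq1 n x a ha]
        exact (hval b).2
      · rw [hq2 n x a ha hx, hq2 n x b (ha.trans hab) hx]
    | succ k ih =>
      intro n x hx
      have hlt : depth x < n := by omega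
      have hy : ∀ y ∈ (hfin x).toFinset,
          Antitone (q n y) ∧ ∀ a, q n y a ∈ Set.Icc (0 : ℝ) 1 :=
        fun y hy => ih n y (by have := hchild x y hy; omega)
      have hval : ∀ a, q n x a ∈ Set.Icc (0 : ℝ) 1 := by
        intro a
        rcases lt_or_ge a h with ha | ha
        · simp [hq1 n x a ha]
        · rw [hrec n x a ha hlt]
          exact ⟨Finset.prod_nonneg fun y hm =>
              (gaussAvg_mem_Icc (hy y hm).1 (hy y hm).2 _ _).1,
            Finset.prod_le_one
              (fun y hm => (gaussAvg_mem_Icc (hy y hm).1 (hy y hm).2 _ _).1)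
              fun y hm => (gaussAvg_mem_Icc (hy y hm).1 (hy y hm).2 _ _).2⟩
      refine ⟨fun a b hab => ?_, hval⟩
      rcases lt_or_ge a h with ha | ha
      · rw [hq1 n x a ha]
        exact (hval b).2
      · rw [hrec n x a ha hlt, hrec n x b (ha.trans hab) hlt]
        exact Finset.prod_le_prod
          (fun y hm => (gaussAvg_mem_Icc (hy y hm).1 (hy y hm).2 _ _).1)
          fun y hm => gaussAvg_antitone (hy y hm).1 (hy y hm).2 (hα y).1.le hab
  have hreg' : ∀ n x, depth x ≤ n → Antitone (q n x) ∧ ∀ a, q n x a ∈ Set.Icc (0 : ℝ) 1 :=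
    fun n x hx => hreg (n - depth x) n x (by omega)
  have hstep : ∀ k n x, depth x + k = n → ∀ a, q n x a ≤ q (n + 1) x a := by
    intro k
    induction k with
    | zero =>
      intro n x hx a
      rcases lt_or_ge a h with ha | ha
      · rw [hq1 n x a ha, hq1 (n + 1) x a ha]
      · rw [hq2 n x a ha hx]
        exact ((hreg' (n + 1) x (by omega)).2 a).1
    | succ k ih =>
      intro n x hx a
      rcases lt_or_ge a h with ha | ha
      · rw [hq1 n x a ha, hq1 (n + 1) x a ha]
      · rw [hrec n x a ha (by omega), hrec (n + 1) x a ha (by omega)]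
        refine Finset.prod_le_prod (fun y hm => ?_) fun y hm => ?_
        all_goals
          have hd := hchild x y hm
          have h1 := hreg' n y (by omega)
        · exact (gaussAvg_mem_Icc h1.1 h1.2 _ _).1
        · have h2 := hreg' (n + 1) y (by omega)
          exact gaussAvg_mono h1.1 h1.2 h2.1 h2.2 (ih n y (by omega)) _ _
  -- Shifting the index by `depth x` discards the unconstrained terms with `n < depth x`.
  have hlim : ∀ x a, ∃ l, Filter.Tendsto (fun n => q n x a) Filter.atTop (nhds l) := by
    intro x a
    have hmono : Monotone fun n => q (n + depth x) x a :=
      monotone_nat_of_le_succ fun n => by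
        have := hstep n (n + depth x) x (by omega) a
        rwa [show n + 1 + depth x = n + depth x + 1 by omega]
    have hbdd : BddAbove (Set.range fun n => q (n + depth x) x a) :=
      ⟨1, by rintro _ ⟨n, rfl⟩; exact ((hreg' (n + depth x) x (by omega)).2 a).2⟩
    exact ⟨_, (Filter.tendsto_add_atTop_iff_nat (f := fun n => q n x a) (depth x)).1
      (tendsto_atTop_ciSup hmono hbdd)⟩
  choose Q hQ using hlim
  have hev : ∀ x, ∀ᶠ n in Filter.atTop,
      Antitone (q n x) ∧ ∀ a, q n x a ∈ Set.Icc (0 : ℝ) 1 := fun x =>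
    (Filter.eventually_ge_atTop (depth x)).mono fun n hn => hreg' n x hn
  refine ⟨Q, hQ, fun x a b hab => ?_, fun x a => ?_, fun x a ha => ?_, fun x a ha => ?_⟩
  · exact le_of_tendsto_of_tendsto (hQ x b) (hQ x a) ((hev x).mono fun n hn => hn.1 hab)
  · exact isClosed_Icc.mem_of_tendsto (hQ x a) ((hev x).mono fun n hn => hn.2 a)
  · refine tendsto_nhds_unique (hQ x a) ?_
    simp [hq1 _ x a ha]
  · rw [finprod_mem_eq_finite_toFinset_prod _ (hfin x)]
    have hprod : Filter.Tendsto (fun n => ∏ y ∈ (hfin x).toFinset, gaussAvg (α y) (q n y) a)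
        Filter.atTop (nhds (∏ y ∈ (hfin x).toFinset, gaussAvg (α y) (Q y) a)) :=
      tendsto_finsetProd _ fun y _ => gaussAvg_tendsto (hev y) (hQ y) _ _
    exact tendsto_nhds_unique (hQ x a) (hprod.congr'
      ((Filter.eventually_gt_atTop (depth x)).mono fun n hn => (hrec n x a ha hn).symm))
end
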